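/- arXiv:2504.15579 — 5 statements merged into one kernel-verified Lean document; each statement's English description precedes it below -/
import Mathlib

section
/- Let C be an abelian category and let F be an additive subfunctor of Ext^1 (i.e., F(C,A) is a subgroup of Ext^1(C,A) for all A, C, stable under the induced actions of morphisms in both variables). If F is closed on the right (for every short exact sequence 0 → A → B → C → 0 whose extension class lies in F(C,A) and every object X, the sequence F(X,A) → F(X,B) → F(X,C) of abelian groups is exact), then F is closed on the left (for every such sequence and every X, the sequence F(C,X) → F(B,X) → F(A,X) is exact). -/
open CategoryTheory CategoryTheory.Limits CategoryTheory.Abelian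

universe w v u

variable {C : Type u} [Category.{v} C] [Abelian C] [HasExt.{w} C]

/-- An additive subfunctor of `Ext¹`, given by a set of extension classes in each
`Ext Z A 1`, which is an additive subgroup stable under pushout (composition with
`Ext.mk₀ a` on the right) and pullback (composition with `Ext.mk₀ c` on the left). -/
structure IsAddSubfunctor (F : ∀ Z A : C, Set (Ext Z A 1)) : Prop where
  zero_mem : ∀ Z A : C, (0 : Ext Z A 1) ∈ F Z A
  add_mem : ∀ (Z A : C), ∀ δ₁ ∈ F Z A, ∀ δ₂ ∈ F Z A, δ₁ + δ₂ ∈ F Z A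
  neg_mem : ∀ (Z A : C), ∀ δ ∈ F Z A, -δ ∈ F Z A
  push : ∀ (Z A A' : C) (a : A ⟶ A'), ∀ δ ∈ F Z A, δ.comp (Ext.mk₀ a) (add_zero 1) ∈ F Z A'
  pull : ∀ (Z Z' A : C) (c : Z' ⟶ Z), ∀ δ ∈ F Z A, (Ext.mk₀ c).comp δ (zero_add 1) ∈ F Z' A

/-- `f` is an `F`-inflation if it is the mono of a short exact sequence whose
extension class lies in `F`. -/
def IsFInflation (F : ∀ Z A : C, Set (Ext Z A 1)) {A B : C} (f : A ⟶ B) : Prop :=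
  ∃ (Z : C) (g : B ⟶ Z) (w : f ≫ g = 0) (hS : (ShortComplex.mk f g w).ShortExact),
    hS.extClass ∈ F Z A

/-- `g` is an `F`-deflation if it is the epi of a short exact sequence whose
extension class lies in `F`. -/
def IsFDeflation (F : ∀ Z A : C, Set (Ext Z A 1)) {B Z : C} (g : B ⟶ Z) : Prop :=
  ∃ (A : C) (f : A ⟶ B) (w : f ≫ g = 0) (hS : (ShortComplex.mk f g w).ShortExact),
    hS.extClass ∈ F Z A

/-!
Let `δ` be a class in `F(S.X₂, X)` that vanishes on `S.X₁`. It is the pullback along `S.g` of some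
class `μ`, and the point is that `μ` is forced to lie in `F`. Realize `δ` by an `F`-exact sequence
`0 ⟶ X ⟶ E ⟶ S.X₂ ⟶ 0`, with mono `i`. The pushout `i_* μ` dies after pullback along `S.g`, hence
is a pushout of the class of `S` and lies in `F`. Closedness on the right, applied to the sequence
realizing `δ`, provides `ν` in `F` with `i_* ν = i_* μ`. Finally `μ - ν` is killed by `i_*`, hence
is a pullback of `δ`, so that `μ - ν`, and with it `μ`, lies in `F`.
-/

section DerivedCategory

open CategoryTheory.Pretriangulated DerivedCategory

universe w'

omit [HasExt.{w} C]

variable [HasDerivedCategory.{w'} C]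

lemma singleFunctor_hom_shift_eq_zero (n : ℤ) ⦃X Y : C⦄ ⦃a : ℤ⦄
    (f : (singleFunctor C n).obj X ⟶ ((singleFunctor C n).obj Y)⟦a⟧) (ha : a < 0) : f = 0 :=
  TStructure.t.zero_of_isLE_of_isGE f n (n - a) (by lia) inferInstance
    (TStructure.t.isGE_shift _ n a (n - a))

lemma shortExact_of_singleFunctor_distTriang {n : ℤ} {S : ShortComplex C}
    {δ : (singleFunctor C n).obj S.X₃ ⟶ ((singleFunctor C n).obj S.X₁)⟦(1 : ℤ)⟧}
    (hT : Triangle.mk ((singleFunctor C n).map S.f) ((singleFunctor C n).map S.g) δ ∈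
      distTriang (DerivedCategory C)) :
    S.ShortExact := by
  have hker : IsLimit (KernelFork.ofι S.f S.zero) :=
    Triangulated.AbelianSubcategory.isLimitKernelForkOfDistTriang
      (singleFunctor_hom_shift_eq_zero n) S.f S.g δ hT
  have hcoker : IsColimit (CokernelCofork.ofπ S.g S.zero) :=
    Triangulated.AbelianSubcategory.isColimitCokernelCoforkOfDistTriang
      (singleFunctor_hom_shift_eq_zero n) S.f S.g δ hT
  exact .mk' (S.exact_of_f_is_kernel hker) (mono_of_isLimit_fork hker)
    (epi_of_isColimit_cofork hcoker)

lemma exists_iso_singleFunctor_obj_of_distTriang {n : ℤ} {A Z : C} {Y : DerivedCategory C}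
    {f : (singleFunctor C n).obj A ⟶ Y} {g : Y ⟶ (singleFunctor C n).obj Z}
    {δ : (singleFunctor C n).obj Z ⟶ ((singleFunctor C n).obj A)⟦(1 : ℤ)⟧}
    (hT : Triangle.mk f g δ ∈ distTriang (DerivedCategory C)) :
    ∃ E : C, Nonempty (Y ≅ (singleFunctor C n).obj E) := by
  have : Y.IsGE n := TStructure.t.isGE₂ _ hT n
    (inferInstanceAs (((singleFunctor C n).obj A).IsGE n))
    (inferInstanceAs (((singleFunctor C n).obj Z).IsGE n))
  have : Y.IsLE n := TStructure.t.isLE₂ _ hT n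
    (inferInstanceAs (((singleFunctor C n).obj A).IsLE n))
    (inferInstanceAs (((singleFunctor C n).obj Z).IsLE n))
  exact exists_iso_singleFunctor_obj_of_isGE_of_isLE Y n

lemma exists_singleFunctor_map_distTriang {n : ℤ} {A Z : C}
    (δ : (singleFunctor C n).obj Z ⟶ ((singleFunctor C n).obj A)⟦(1 : ℤ)⟧) :
    ∃ (E : C) (i : A ⟶ E) (p : E ⟶ Z),
      Triangle.mk ((singleFunctor C n).map i) ((singleFunctor C n).map p) δ ∈
        distTriang (DerivedCategory C) := by
  obtain ⟨Y, f, g, hT⟩ := distinguished_cocone_triangle₂ δ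
  obtain ⟨E, ⟨e⟩⟩ := exists_iso_singleFunctor_obj_of_distTriang hT
  obtain ⟨i, hi⟩ := (singleFunctor C n).map_surjective (f ≫ e.hom)
  obtain ⟨p, hp⟩ := (singleFunctor C n).map_surjective (e.inv ≫ g)
  have comm₁ : (singleFunctor C n).map i ≫ e.inv = 𝟙 _ ≫ f := by simp [hi]
  have comm₂ : (singleFunctor C n).map p ≫ 𝟙 _ = e.inv ≫ g := by simp [hp]
  have comm₃ : δ ≫ (𝟙 ((singleFunctor C n).obj A))⟦(1 : ℤ)⟧' = 𝟙 _ ≫ δ := by simp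
  exact ⟨E, i, p, isomorphic_distinguished _ hT _
    (Triangle.isoMk _ _ (Iso.refl _) e.symm (Iso.refl _) comm₁ comm₂ comm₃)⟩

lemma singleδ_eq_of_distTriang {S : ShortComplex C} (hS : S.ShortExact)
    {δ : (singleFunctor C 0).obj S.X₃ ⟶ ((singleFunctor C 0).obj S.X₁)⟦(1 : ℤ)⟧}
    (hT : Triangle.mk ((singleFunctor C 0).map S.f) ((singleFunctor C 0).map S.g) δ ∈
      distTriang (DerivedCategory C)) :
    hS.singleδ = δ := by
  obtain ⟨c, hgc, hδc⟩ :
      ∃ c : (singleFunctor C 0).obj S.X₃ ⟶ (singleFunctor C 0).obj S.X₃,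
        (singleFunctor C 0).map S.g ≫ c = 𝟙 _ ≫ (singleFunctor C 0).map S.g ∧
        hS.singleδ ≫ (𝟙 ((singleFunctor C 0).obj S.X₁))⟦(1 : ℤ)⟧' = c ≫ δ :=
    complete_distinguished_triangle_morphism _ _ hS.singleTriangle_distinguished hT (𝟙 _) (𝟙 _)
      ((Category.comp_id _).trans (Category.id_comp _).symm)
  have hc : c = 𝟙 _ := by
    obtain ⟨z, rfl⟩ := (singleFunctor C 0).map_surjective c
    have : Epi S.g := hS.epi_g
    have hgz : S.g ≫ z = S.g := (singleFunctor C 0).map_injective (by simpa using hgc)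
    rw [(cancel_epi_id S.g).1 hgz, CategoryTheory.Functor.map_id]
  simpa [hc] using hδc

end DerivedCategory

lemma exists_shortExact_extClass_eq {Z A : C} (δ : Ext Z A 1) :
    ∃ (E : C) (i : A ⟶ E) (p : E ⟶ Z) (w : i ≫ p = 0)
      (hS : (ShortComplex.mk i p w).ShortExact), hS.extClass = δ := by
  let := HasDerivedCategory.standard C
  obtain ⟨E, i, p, hT⟩ := exists_singleFunctor_map_distTriang δ.hom
  have w : i ≫ p = 0 := (DerivedCategory.singleFunctor C 0).map_injective (by
    rw [Functor.map_comp, Functor.map_zero]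
    exact Pretriangulated.comp_distTriang_mor_zero₁₂ _ hT)
  have hS : (ShortComplex.mk i p w).ShortExact := shortExact_of_singleFunctor_distTriang hT
  refine ⟨E, i, p, w, hS, ?_⟩
  ext
  rw [hS.extClass_hom]
  exact singleδ_eq_of_distTriang hS hT

namespace IsAddSubfunctor

variable {F : ∀ Z A : C, Set (Ext Z A 1)} {S : ShortComplex C} {X : C}

lemma mem_of_mk₀_g_comp_eq_zero (hF : IsAddSubfunctor F) (hS : S.ShortExact)
    (hSF : hS.extClass ∈ F S.X₃ S.X₁) {μ : Ext S.X₃ X 1}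
    (hμ : (Ext.mk₀ S.g).comp μ (zero_add 1) = 0) : μ ∈ F S.X₃ X := by
  obtain ⟨φ, rfl⟩ := Ext.contravariant_sequence_exact₃ hS X μ hμ (add_zero 1)
  obtain ⟨a, rfl⟩ := (Ext.mk₀_bijective _ _).surjective φ
  exact hF.push _ _ _ a _ hSF

lemma mem_of_comp_mk₀_f_eq_zero (hF : IsAddSubfunctor F) (hS : S.ShortExact)
    (hSF : hS.extClass ∈ F S.X₃ S.X₁) {μ : Ext X S.X₁ 1}
    (hμ : μ.comp (Ext.mk₀ S.f) (add_zero 1) = 0) : μ ∈ F X S.X₁ := by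
  obtain ⟨φ, rfl⟩ := Ext.covariant_sequence_exact₁ X hS μ hμ (zero_add 1)
  obtain ⟨c, rfl⟩ := (Ext.mk₀_bijective _ _).surjective φ
  exact hF.pull _ _ _ c _ hSF

lemma mem_of_comp_mk₀_f_eq (hF : IsAddSubfunctor F) (hS : S.ShortExact)
    (hSF : hS.extClass ∈ F S.X₃ S.X₁) {μ ν : Ext X S.X₁ 1} (hν : ν ∈ F X S.X₁)
    (h : ν.comp (Ext.mk₀ S.f) (add_zero 1) = μ.comp (Ext.mk₀ S.f) (add_zero 1)) :
    μ ∈ F X S.X₁ := by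
  have hdiff : μ + -ν ∈ F X S.X₁ := hF.mem_of_comp_mk₀_f_eq_zero hS hSF (by
    rw [Ext.add_comp, Ext.neg_comp, h, add_neg_cancel])
  simpa only [neg_add_cancel_right] using hF.add_mem _ _ _ hdiff _ hν

end IsAddSubfunctor

/-- If an additive subfunctor `F` of `Ext¹` is closed on the right, then it is
closed on the left. -/
theorem closed_on_right_implies_closed_on_left
    (F : ∀ Z A : C, Set (Ext Z A 1)) (hF : IsAddSubfunctor F)
    (hright : ∀ (S : ShortComplex C) (hS : S.ShortExact),
      hS.extClass ∈ F S.X₃ S.X₁ →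
      ∀ (X : C) (δ : Ext X S.X₂ 1), δ ∈ F X S.X₂ →
        (δ.comp (Ext.mk₀ S.g) (add_zero 1) = 0 ↔
          ∃ μ ∈ F X S.X₁, μ.comp (Ext.mk₀ S.f) (add_zero 1) = δ)) :
    ∀ (S : ShortComplex C) (hS : S.ShortExact),
      hS.extClass ∈ F S.X₃ S.X₁ →
      ∀ (X : C) (δ : Ext S.X₂ X 1), δ ∈ F S.X₂ X →
        ((Ext.mk₀ S.f).comp δ (zero_add 1) = 0 ↔
          ∃ μ ∈ F S.X₃ X, (Ext.mk₀ S.g).comp μ (zero_add 1) = δ) := by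
  intro S hS hSF X δ hδ
  constructor
  · intro hδ₀
    obtain ⟨μ, hμ⟩ := Ext.contravariant_sequence_exact₂ hS X δ hδ₀
    obtain ⟨E, i, p, w, hT, rfl⟩ := exists_shortExact_extClass_eq δ
    have hpush : μ.comp (Ext.mk₀ i) (add_zero 1) ∈ F S.X₃ E :=
      hF.mem_of_mk₀_g_comp_eq_zero hS hSF (by
        rw [← Ext.comp_assoc_of_third_deg_zero, hμ]
        exact hT.extClass_comp)
    have hpush₀ : (μ.comp (Ext.mk₀ i) (add_zero 1)).comp (Ext.mk₀ p) (add_zero 1) = 0 := by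
      rw [Ext.comp_assoc_of_third_deg_zero, Ext.mk₀_comp_mk₀, w, Ext.mk₀_zero, Ext.comp_zero]
    obtain ⟨ν, hνF, hν⟩ := (hright _ hT hδ S.X₃ _ hpush).1 hpush₀
    exact ⟨μ, hF.mem_of_comp_mk₀_f_eq hT hδ hνF hν, hμ⟩
  · rintro ⟨μ, -, rfl⟩
    rw [Ext.mk₀_comp_mk₀_assoc, S.zero, Ext.mk₀_zero, Ext.zero_comp]
end

section
/- Let C be an abelian category and F an additive subfunctor of Ext^1. Then the class of F-inflations (monomorphisms arising as the left map of a short exact sequence whose class lies in F) is closed under composition if and only if the class of F-deflations (epimorphisms arising as the right map of such a sequence) is closed under composition. -/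
open CategoryTheory CategoryTheory.Limits CategoryTheory.Abelian

universe w v u

variable {C : Type u} [Category.{v} C] [Abelian C] [HasExt.{w} C]

/-- The class of `F`-inflations is closed under composition. -/
def InflationsClosed (F : ∀ Z A : C, Set (Ext Z A 1)) : Prop :=
  ∀ ⦃A B D : C⦄ (f : A ⟶ B) (g : B ⟶ D),
    IsFInflation F f → IsFInflation F g → IsFInflation F (f ≫ g)

/-- The class of `F`-deflations is closed under composition. -/
def DeflationsClosed (F : ∀ Z A : C, Set (Ext Z A 1)) : Prop :=
  ∀ ⦃E B Z : C⦄ (e : E ⟶ B) (g : B ⟶ Z),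
    IsFDeflation F e → IsFDeflation F g → IsFDeflation F (e ≫ g)

/-! Let `e : X ⟶ Y` and `g : Y ⟶ Z` be deflations, and let `a : A ⟶ Y` be the kernel of `g`.
The kernel of `e ≫ g` is `N = X ×_Y A ⟶ X`. The map `N ⟶ X ⊞ A` is an inflation, since
`N ⟶ X ⊞ A ⟶ Y` is a pushout of the kernel sequence of `e`, and so is the pushout `X ⊞ A ⟶ P`
of `a` along `A ⟶ X ⊞ A`. If inflations compose, then `N ⟶ P` is an inflation; as it factors
through `N ⟶ X`, the latter is one too, so its cokernel `e ≫ g` is a deflation. Only pushouts and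
pullbacks of exact sequences intervene, so the converse follows by passing to `Cᵒᵖ`. -/

section ShortExactClass

variable {𝒜 : Type*} [Category* 𝒜]

section HasZeroMorphisms

variable [HasZeroMorphisms 𝒜]

/-- The inflations of a class `E` of short complexes: the left maps of its members. -/
def inflations (E : ObjectProperty (ShortComplex 𝒜)) : MorphismProperty 𝒜 :=
  fun _ B f ↦ ∃ (Z : 𝒜) (g : B ⟶ Z) (w : f ≫ g = 0), E (ShortComplex.mk f g w)

/-- The deflations of a class `E` of short complexes: the right maps of its members. -/
def deflations (E : ObjectProperty (ShortComplex 𝒜)) : MorphismProperty 𝒜 :=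
  fun B _ g ↦ ∃ (A : 𝒜) (f : A ⟶ B) (w : f ≫ g = 0), E (ShortComplex.mk f g w)

/-- The class of short complexes in the opposite category whose duals lie in `E`; it exchanges
inflations and deflations. -/
def oppositeClass (E : ObjectProperty (ShortComplex 𝒜)) : ObjectProperty (ShortComplex 𝒜ᵒᵖ) :=
  fun S ↦ E S.unop

/-- A class of short exact sequences stable under pushout and pullback. A morphism of short exact
sequences exhibits its target as a pushout of its source when it is an isomorphism on the right
terms, and its source as a pullback of its target when it is an isomorphism on the left terms. -/
structure IsStableUnderPushoutPullback (E : ObjectProperty (ShortComplex 𝒜)) : Prop where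
  shortExact {S : ShortComplex 𝒜} : E S → S.ShortExact
  of_pushout {S₁ S₂ : ShortComplex 𝒜} (φ : S₁ ⟶ S₂) [IsIso φ.τ₃] : S₂.ShortExact → E S₁ → E S₂
  of_pullback {S₁ S₂ : ShortComplex 𝒜} (φ : S₁ ⟶ S₂) [IsIso φ.τ₁] : S₁.ShortExact → E S₂ → E S₁

lemma inflations_oppositeClass (E : ObjectProperty (ShortComplex 𝒜)) :
    inflations (oppositeClass E) = (deflations E).op := by
  ext X Y f
  exact ⟨fun ⟨Z, g, w, h⟩ ↦ ⟨Z.unop, g.unop, congrArg Quiver.Hom.unop w, h⟩,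
    fun ⟨A, g, w, h⟩ ↦ ⟨.op A, g.op, congrArg Quiver.Hom.op w, h⟩⟩

lemma deflations_oppositeClass (E : ObjectProperty (ShortComplex 𝒜)) :
    deflations (oppositeClass E) = (inflations E).op := by
  ext X Y f
  exact ⟨fun ⟨A, g, w, h⟩ ↦ ⟨A.unop, g.unop, congrArg Quiver.Hom.unop w, h⟩,
    fun ⟨Z, g, w, h⟩ ↦ ⟨.op Z, g.op, congrArg Quiver.Hom.op w, h⟩⟩

lemma IsStableUnderPushoutPullback.opposite {E : ObjectProperty (ShortComplex 𝒜)}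
    (hE : IsStableUnderPushoutPullback E) : IsStableUnderPushoutPullback (oppositeClass E) where
  shortExact h := (ShortComplex.shortExact_iff_unop _).2 (hE.shortExact h)
  of_pushout φ _ hS h :=
    have : IsIso (ShortComplex.unopMap φ).τ₁ := inferInstanceAs (IsIso φ.τ₃.unop)
    hE.of_pullback (ShortComplex.unopMap φ) hS.unop h
  of_pullback φ _ hS h :=
    have : IsIso (ShortComplex.unopMap φ).τ₃ := inferInstanceAs (IsIso φ.τ₁.unop)
    hE.of_pushout (ShortComplex.unopMap φ) hS.unop h

end HasZeroMorphisms

variable [Abelian 𝒜]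

lemma shortExact_cokernel {A B : 𝒜} (f : A ⟶ B) [Mono f] :
    (ShortComplex.mk f (cokernel.π f) (cokernel.condition f)).ShortExact where
  exact := ShortComplex.exact_cokernel f

lemma shortExact_comp_of_isPullback {N X Y Z A : 𝒜} {i : N ⟶ X} {n : N ⟶ A} {e : X ⟶ Y}
    {a : A ⟶ Y} {g : Y ⟶ Z} {w : a ≫ g = 0} [Epi e] (sq : IsPullback i n e a)
    (hS : (ShortComplex.mk a g w).ShortExact) :
    (ShortComplex.mk i (e ≫ g) (by rw [sq.w_assoc, w, comp_zero])).ShortExact := by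
  have : Mono a := hS.mono_f
  have : Epi g := hS.epi_g
  have : Mono i := MorphismProperty.of_isPullback (P := .monomorphisms 𝒜) sq.flip ‹Mono a›
  have exact : (ShortComplex.mk i (e ≫ g) (by rw [sq.w_assoc, w, comp_zero])).Exact :=
    ShortComplex.exact_of_f_is_kernel _ <| KernelFork.IsLimit.ofι' _ _ fun k hk ↦
      ⟨sq.lift k (hS.exact.lift (k ≫ e) (by simpa using hk)) (hS.exact.lift_f _ _).symm,
        sq.lift_fst _ _ _⟩
  exact { exact }

lemma shortExact_shortComplex'_of_isPullback {N X Y A : 𝒜} {i : N ⟶ X} {n : N ⟶ A} {e : X ⟶ Y}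
    {a : A ⟶ Y} [Epi e] (sq : IsPullback i n e a) : sq.shortComplex'.ShortExact where
  exact := sq.exact_shortComplex'
  mono_f := sq.mono_shortComplex'_f
  epi_g := show Epi (biprod.desc e (-a)) from epi_of_epi_fac (biprod.inl_desc e (-a))

namespace IsStableUnderPushoutPullback

variable {E : ObjectProperty (ShortComplex 𝒜)}

lemma mono_of_inflations (hE : IsStableUnderPushoutPullback E) {A B : 𝒜} {f : A ⟶ B} :
    inflations E f → Mono f :=
  fun ⟨_, _, _, h⟩ ↦ (hE.shortExact h).mono_f

lemma epi_of_deflations (hE : IsStableUnderPushoutPullback E) {B Z : 𝒜} {g : B ⟶ Z} :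
    deflations E g → Epi g :=
  fun ⟨_, _, _, h⟩ ↦ (hE.shortExact h).epi_g

lemma mem_of_inflations_comp (hE : IsStableUnderPushoutPullback E) {S : ShortComplex 𝒜}
    (hS : S.ShortExact) {P : 𝒜} {k : S.X₂ ⟶ P} (h : inflations E (S.f ≫ k)) : E S := by
  obtain ⟨Z, q, w, hT⟩ := h
  have : Epi S.g := hS.epi_g
  let c : S.X₃ ⟶ Z := hS.exact.desc (k ≫ q) (by simpa using w)
  let φ : S ⟶ ShortComplex.mk (S.f ≫ k) q w :=
    { τ₁ := 𝟙 _, τ₂ := k, τ₃ := c, comm₂₃ := (hS.exact.g_desc _ _).symm }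
  have : IsIso φ.τ₁ := inferInstanceAs (IsIso (𝟙 _))
  exact hE.of_pullback φ hS hT

lemma inflations_isStableUnderCobaseChange (hE : IsStableUnderPushoutPullback E) :
    (inflations E).IsStableUnderCobaseChange where
  of_isPushout {A A' B B'} f g f' g' sq hf := by
    have : Mono f := hE.mono_of_inflations hf
    have : Mono f' := MorphismProperty.of_isPushout (P := .monomorphisms 𝒜) sq ‹Mono f›
    have hS : E (ShortComplex.mk f (cokernel.π f) (cokernel.condition f)) :=
      hE.mem_of_inflations_comp (shortExact_cokernel f) (k := 𝟙 A') (by simpa using hf)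
    let φ : ShortComplex.mk f (cokernel.π f) (cokernel.condition f) ⟶
        ShortComplex.mk f' (cokernel.π f') (cokernel.condition f') :=
      { τ₁ := g, τ₂ := g', τ₃ := cokernel.map f f' g g' sq.w.symm, comm₁₂ := sq.w }
    have : IsIso φ.τ₃ := isIso_cokernel_map_of_isPushout sq.flip
    exact ⟨_, _, _, hE.of_pushout φ (shortExact_cokernel f') hS⟩

lemma inflations_lift_of_isPullback (hE : IsStableUnderPushoutPullback E) {N X Y A : 𝒜}
    {i : N ⟶ X} {n : N ⟶ A} {e : X ⟶ Y} {a : A ⟶ Y} (sq : IsPullback i n e a)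
    (he : deflations E e) : inflations E (biprod.lift i n) := by
  have : Epi e := hE.epi_of_deflations he
  obtain ⟨K, j, w, h⟩ := he
  let t : K ⟶ N := sq.lift j 0 (by simpa using w)
  let φ : ShortComplex.mk j e w ⟶ sq.shortComplex' :=
    { τ₁ := t
      τ₂ := biprod.inl
      τ₃ := 𝟙 Y
      comm₁₂ := show t ≫ biprod.lift i n = j ≫ biprod.inl by
        apply biprod.hom_ext <;> simp [t]
      comm₂₃ := show biprod.inl ≫ biprod.desc e (-a) = e ≫ 𝟙 Y by simp }
  have : IsIso φ.τ₃ := inferInstanceAs (IsIso (𝟙 Y))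
  exact ⟨_, _, _, hE.of_pushout φ (shortExact_shortComplex'_of_isPullback sq) h⟩

lemma deflations_isStableUnderComposition (hE : IsStableUnderPushoutPullback E)
    [(inflations E).IsStableUnderComposition] : (deflations E).IsStableUnderComposition where
  comp_mem {X Y Z} e g he := by
    rintro ⟨A, a, w, hg⟩
    have : Epi e := hE.epi_of_deflations he
    have := hE.inflations_isStableUnderCobaseChange
    let i := pullback.fst e a
    let n := pullback.snd e a
    have hN : (ShortComplex.mk i (e ≫ g) _).ShortExact :=
      shortExact_comp_of_isPullback (.of_hasPullback e a) (hE.shortExact hg)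
    let p : Y ⟶ pushout a (biprod.inr : A ⟶ X ⊞ A) := pushout.inl _ _
    let q : X ⊞ A ⟶ pushout a (biprod.inr : A ⟶ X ⊞ A) := pushout.inr _ _
    have hn : inflations E (biprod.lift i n) :=
      hE.inflations_lift_of_isPullback (.of_hasPullback e a) he
    have hq : inflations E q := MorphismProperty.pushout_inr _ _ ⟨Z, g, w, hg⟩
    have fac : biprod.lift i n ≫ q = i ≫ (biprod.inl ≫ q + e ≫ p) := by
      have hpq : a ≫ p = biprod.inr ≫ q := pushout.condition
      have hin : i ≫ e = n ≫ a := pullback.condition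
      simp only [biprod.lift_eq, Preadditive.add_comp, Preadditive.comp_add, Category.assoc,
        reassoc_of% hin, hpq]
    have hnq : inflations E (biprod.lift i n ≫ q) := (inflations E).comp_mem _ _ hn hq
    exact ⟨_, _, _, hE.mem_of_inflations_comp hN (fac ▸ hnq)⟩

lemma inflations_isStableUnderComposition (hE : IsStableUnderPushoutPullback E)
    [(deflations E).IsStableUnderComposition] : (inflations E).IsStableUnderComposition := by
  have : (inflations (oppositeClass E)).IsStableUnderComposition := by
    rw [inflations_oppositeClass]
    infer_instance
  have : (inflations E).op.IsStableUnderComposition :=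
    deflations_oppositeClass E ▸ hE.opposite.deflations_isStableUnderComposition
  exact inferInstanceAs (inflations E).op.unop.IsStableUnderComposition

theorem inflations_isStableUnderComposition_iff (hE : IsStableUnderPushoutPullback E) :
    (inflations E).IsStableUnderComposition ↔ (deflations E).IsStableUnderComposition :=
  ⟨fun _ ↦ hE.deflations_isStableUnderComposition,
    fun _ ↦ hE.inflations_isStableUnderComposition⟩

end IsStableUnderPushoutPullback

end ShortExactClass

/-- The class of `F`-exact sequences: the short exact sequences whose extension class lies
in `F`. -/
def fExactSequences (F : ∀ Z A : C, Set (Ext Z A 1)) : ObjectProperty (ShortComplex C) :=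
  fun S ↦ ∃ hS : S.ShortExact, hS.extClass ∈ F S.X₃ S.X₁

lemma inflationsClosed_iff_isStableUnderComposition (F : ∀ Z A : C, Set (Ext Z A 1)) :
    InflationsClosed F ↔ (inflations (fExactSequences F)).IsStableUnderComposition :=
  ⟨fun h ↦ ⟨fun f g ↦ h f g⟩, fun h _ _ _ ↦ h.comp_mem⟩

lemma deflationsClosed_iff_isStableUnderComposition (F : ∀ Z A : C, Set (Ext Z A 1)) :
    DeflationsClosed F ↔ (deflations (fExactSequences F)).IsStableUnderComposition :=
  ⟨fun h ↦ ⟨fun e g ↦ h e g⟩, fun h _ _ _ ↦ h.comp_mem⟩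

lemma extClass_eq_of_isIso_τ₃ {S₁ S₂ : ShortComplex C} (h₁ : S₁.ShortExact)
    (h₂ : S₂.ShortExact) (φ : S₁ ⟶ S₂) [IsIso φ.τ₃] :
    h₂.extClass = (Ext.mk₀ (inv φ.τ₃)).comp
      (h₁.extClass.comp (Ext.mk₀ φ.τ₁) (add_zero 1)) (zero_add 1) := by
  rw [ShortComplex.ShortExact.extClass_naturality h₁ h₂ φ, Ext.mk₀_comp_mk₀_assoc,
    IsIso.inv_hom_id, Ext.mk₀_id_comp]

lemma extClass_eq_of_isIso_τ₁ {S₁ S₂ : ShortComplex C} (h₁ : S₁.ShortExact)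
    (h₂ : S₂.ShortExact) (φ : S₁ ⟶ S₂) [IsIso φ.τ₁] :
    h₁.extClass = ((Ext.mk₀ φ.τ₃).comp h₂.extClass (zero_add 1)).comp
      (Ext.mk₀ (inv φ.τ₁)) (add_zero 1) := by
  rw [← ShortComplex.ShortExact.extClass_naturality h₁ h₂ φ, Ext.comp_assoc_of_third_deg_zero,
    Ext.mk₀_comp_mk₀, IsIso.hom_inv_id, Ext.comp_mk₀_id]

lemma isStableUnderPushoutPullback_fExactSequences {F : ∀ Z A : C, Set (Ext Z A 1)}
    (push : ∀ (Z A A' : C) (a : A ⟶ A'), ∀ δ ∈ F Z A,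
      δ.comp (Ext.mk₀ a) (add_zero 1) ∈ F Z A')
    (pull : ∀ (Z Z' A : C) (c : Z' ⟶ Z), ∀ δ ∈ F Z A,
      (Ext.mk₀ c).comp δ (zero_add 1) ∈ F Z' A) :
    IsStableUnderPushoutPullback (fExactSequences F) where
  shortExact := fun ⟨hS, _⟩ ↦ hS
  of_pushout φ _ h₂ := fun ⟨h₁, h⟩ ↦
    ⟨h₂, extClass_eq_of_isIso_τ₃ h₁ h₂ φ ▸ pull _ _ _ _ _ (push _ _ _ _ _ h)⟩
  of_pullback φ _ h₁ := fun ⟨h₂, h⟩ ↦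
    ⟨h₁, extClass_eq_of_isIso_τ₁ h₁ h₂ φ ▸ push _ _ _ _ _ (pull _ _ _ _ _ h)⟩

theorem inflationsClosed_iff_deflationsClosed_general (F : ∀ Z A : C, Set (Ext Z A 1))
    (push : ∀ (Z A A' : C) (a : A ⟶ A'), ∀ δ ∈ F Z A,
      δ.comp (Ext.mk₀ a) (add_zero 1) ∈ F Z A')
    (pull : ∀ (Z Z' A : C) (c : Z' ⟶ Z), ∀ δ ∈ F Z A,
      (Ext.mk₀ c).comp δ (zero_add 1) ∈ F Z' A) :
    InflationsClosed F ↔ DeflationsClosed F := by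
  rw [inflationsClosed_iff_isStableUnderComposition, deflationsClosed_iff_isStableUnderComposition]
  exact (isStableUnderPushoutPullback_fExactSequences push
    pull).inflations_isStableUnderComposition_iff

/-- For an additive subfunctor `F` of `Ext¹`, the `F`-inflations are closed
under composition if and only if the `F`-deflations are. -/
theorem inflationsClosed_iff_deflationsClosed
    (F : ∀ Z A : C, Set (Ext Z A 1)) (hF : IsAddSubfunctor F) :
    InflationsClosed F ↔ DeflationsClosed F :=
  inflationsClosed_iff_deflationsClosed_general F hF.push hF.pull
end

section
/- Let C be an abelian category and F an additive subfunctor of Ext^1 that is closed (the F-inflations are closed under composition). Then F satisfies the 3×3-lemma property: given a commutative 3×3 diagram in C whose three columns and whose first and third rows are F-exact short exact sequences, and such that the top-left square together with the induced map on cokernels forms a morphism of short exact sequences, the middle row is also an F-exact short exact sequence. -/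
open CategoryTheory CategoryTheory.Limits CategoryTheory.Abelian

universe w v u

variable {C : Type u} [Category.{v} C] [Abelian C] [HasExt.{w} C]

/-!
Closure of inflations under composition forces closure of deflations under composition. Given
this, let `q : E ⟶ K` be a cokernel of the composite inflation `A ⟶ E`. The map `H ⟶ K` induced by
`D ⟶ E` is an inflation because its composite with `K ⟶ I` is the inflation `g`, and its
cokernel is `K ⟶ G`. Hence `e` is the composite of the deflations `E ⟶ K` and `K ⟶ G`.
-/

omit [HasExt.{w} C] in
theorem exact_of_epi_τ₂_of_mono_τ₃ {S T : ShortComplex C} (hS : S.Exact) (φ : S ⟶ T)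
    [Epi φ.τ₂] [Mono φ.τ₃] : T.Exact := by
  rw [ShortComplex.exact_iff_exact_up_to_refinements]
  intro X x hx
  obtain ⟨Y, π, hπ, y, hy⟩ := surjective_up_to_refinements_of_epi φ.τ₂ x
  have hyg : y ≫ S.g = 0 := by
    rw [← cancel_mono φ.τ₃, Category.assoc, ← φ.comm₂₃, ← reassoc_of% hy, hx, comp_zero, zero_comp]
  obtain ⟨Y', π', hπ', z, hz⟩ := hS.exact_up_to_refinements y hyg
  refine ⟨Y', π' ≫ π, epi_comp _ _, z ≫ φ.τ₁, ?_⟩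
  rw [Category.assoc, hy, reassoc_of% hz, Category.assoc, φ.comm₁₂]

omit [HasExt.{w} C] in
theorem shortExact_of_epi_τ₂_of_isIso_τ₃ {S T : ShortComplex C} (hS : S.ShortExact) (φ : S ⟶ T)
    [Epi φ.τ₂] [IsIso φ.τ₃] [Mono T.f] : T.ShortExact := by
  have := hS.epi_g
  have : Epi (φ.τ₂ ≫ T.g) := by
    rw [φ.comm₂₃]
    exact epi_comp _ _
  exact .mk' (exact_of_epi_τ₂_of_mono_τ₃ hS.exact φ) inferInstance (epi_of_epi φ.τ₂ T.g)

omit [HasExt.{w} C] in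
theorem shortExact_biprod_map_id {S : ShortComplex C} (hS : S.ShortExact) (E : C) :
    (ShortComplex.mk (biprod.map (𝟙 E) S.f) (biprod.snd ≫ S.g) (by simp)).ShortExact := by
  have := hS.mono_f
  have := hS.epi_g
  have : Epi ((biprod.snd : E ⊞ S.X₂ ⟶ S.X₂) ≫ S.g) := epi_comp _ _
  refine .mk (ShortComplex.exact_of_f_is_kernel _ (KernelFork.IsLimit.ofι' _ _ fun x hx => ?_))
  have hx' : (x ≫ biprod.snd) ≫ S.g = 0 := by simpa using hx
  refine ⟨biprod.lift (x ≫ biprod.fst) (hS.exact.lift _ hx'), ?_⟩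
  apply biprod.hom_ext <;> simp [hS.exact.lift_f]

omit [HasExt.{w} C] in
theorem shortExact_comp_of_isPullback_s3 {S : ShortComplex C} (hS : S.ShortExact) {D E : C}
    {t : D ⟶ E} {l : D ⟶ S.X₁} {p : E ⟶ S.X₂} [Epi p] (sq : IsPullback t l p S.f) :
    (ShortComplex.mk t (p ≫ S.g) (by simp [reassoc_of% sq.w])).ShortExact := by
  have := hS.mono_f
  have := hS.epi_g
  have : Mono t := (MorphismProperty.monomorphisms C).of_isPullback sq.flip hS.mono_f
  have : Epi (p ≫ S.g) := epi_comp _ _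
  refine .mk (ShortComplex.exact_of_f_is_kernel _ (KernelFork.IsLimit.ofι' _ _ fun x hx => ?_))
  have hx' : (x ≫ p) ≫ S.g = 0 := by simpa using hx
  exact ⟨sq.lift x (hS.exact.lift _ hx') (hS.exact.lift_f _ hx').symm, sq.lift_fst _ _ _⟩

omit [HasExt.{w} C] in
theorem shortExact_shortComplex'_of_isPullback_s3 {X₁ X₂ X₃ X₄ : C} {t : X₁ ⟶ X₂} {l : X₁ ⟶ X₃}
    {r : X₂ ⟶ X₄} {b : X₃ ⟶ X₄} [Epi r] (sq : IsPullback t l r b) :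
    sq.shortComplex'.ShortExact := by
  have : Epi (biprod.inl ≫ sq.shortComplex'.g) := by
    simpa [CommSq.shortComplex'] using ‹Epi r›
  exact .mk' sq.exact_shortComplex' sq.mono_shortComplex'_f (epi_of_epi biprod.inl _)

section

variable {F : ∀ Z A : C, Set (Ext Z A 1)}

theorem IsAddSubfunctor.extClass_mem_of_isIso_τ₃ (hF : IsAddSubfunctor F) {S T : ShortComplex C}
    (hS : S.ShortExact) (hT : T.ShortExact) (φ : S ⟶ T) [IsIso φ.τ₃]
    (hmem : hS.extClass ∈ F S.X₃ S.X₁) : hT.extClass ∈ F T.X₃ T.X₁ := by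
  have hpull := hF.pull _ _ _ (inv φ.τ₃) _ (hF.push _ _ _ φ.τ₁ _ hmem)
  rwa [ShortComplex.ShortExact.extClass_naturality hS hT φ, Ext.mk₀_comp_mk₀_assoc,
    IsIso.inv_hom_id, Ext.mk₀_id_comp] at hpull

theorem IsAddSubfunctor.extClass_mem_of_isIso_τ₁ (hF : IsAddSubfunctor F) {S T : ShortComplex C}
    (hS : S.ShortExact) (hT : T.ShortExact) (φ : S ⟶ T) [IsIso φ.τ₁]
    (hmem : hT.extClass ∈ F T.X₃ T.X₁) : hS.extClass ∈ F S.X₃ S.X₁ := by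
  have hpush := hF.push _ _ _ (inv φ.τ₁) _ (hF.pull _ _ _ φ.τ₃ _ hmem)
  rwa [← ShortComplex.ShortExact.extClass_naturality hS hT φ, Ext.comp_assoc_of_third_deg_zero,
    Ext.mk₀_comp_mk₀, IsIso.hom_inv_id, Ext.comp_mk₀_id] at hpush

theorem IsFInflation.extClass_mem_of_comp (hF : IsAddSubfunctor F) {S : ShortComplex C}
    (hS : S.ShortExact) {D : C} {j : S.X₂ ⟶ D} (hj : IsFInflation F (S.f ≫ j)) :
    hS.extClass ∈ F S.X₃ S.X₁ := by
  obtain ⟨K, q, w, hT, hmem⟩ := hj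
  have := hS.epi_g
  have hjq : S.f ≫ j ≫ q = 0 := by rw [← Category.assoc, w]
  exact hF.extClass_mem_of_isIso_τ₁ hS hT
    { τ₁ := 𝟙 S.X₁, τ₂ := j, τ₃ := hS.exact.desc (j ≫ q) hjq } hmem

theorem IsFDeflation.extClass_mem (hF : IsAddSubfunctor F) {S : ShortComplex C}
    (hS : S.ShortExact) (hg : IsFDeflation F S.g) : hS.extClass ∈ F S.X₃ S.X₁ := by
  obtain ⟨A, f, w, hT, hmem⟩ := hg
  have := hS.mono_f
  exact hF.extClass_mem_of_isIso_τ₃ hT hS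
    { τ₁ := hS.exact.lift f w, τ₂ := 𝟙 S.X₂, τ₃ := 𝟙 S.X₃
      comm₁₂ := by simp [hS.exact.lift_f] } hmem

theorem IsFInflation.biprod_map_id (hF : IsAddSubfunctor F) {A B : C} {f : A ⟶ B}
    (hf : IsFInflation F f) (E : C) : IsFInflation F (biprod.map (𝟙 E) f) := by
  obtain ⟨Z, g, w, hS, hmem⟩ := hf
  let φ : ShortComplex.mk f g w ⟶ ShortComplex.mk (biprod.map (𝟙 E) f) (biprod.snd ≫ g)
      (by simp [w]) :=
    { τ₁ := biprod.inr, τ₂ := biprod.inr, τ₃ := 𝟙 Z }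
  have : IsIso φ.τ₃ := inferInstanceAs (IsIso (𝟙 Z))
  exact ⟨Z, _, _, shortExact_biprod_map_id hS E, hF.extClass_mem_of_isIso_τ₃ hS _ φ hmem⟩

theorem IsFDeflation.isFInflation_biprod_lift (hF : IsAddSubfunctor F) {X₁ X₂ X₃ X₄ : C}
    {t : X₁ ⟶ X₂} {l : X₁ ⟶ X₃} {r : X₂ ⟶ X₄} {b : X₃ ⟶ X₄} (hr : IsFDeflation F r)
    (sq : IsPullback t l r b) : IsFInflation F (biprod.lift t l) := by
  obtain ⟨A, f, w, hS, hmem⟩ := hr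
  have : Epi r := hS.epi_g
  have hT := shortExact_shortComplex'_of_isPullback_s3 sq
  let φ : ShortComplex.mk f r w ⟶ sq.shortComplex' :=
    { τ₁ := sq.lift f 0 (by simp [w]), τ₂ := biprod.inl, τ₃ := 𝟙 X₄
      comm₁₂ := by apply biprod.hom_ext <;> simp [CommSq.shortComplex']
      comm₂₃ := by simp [CommSq.shortComplex'] }
  have : IsIso φ.τ₃ := inferInstanceAs (IsIso (𝟙 X₄))
  exact ⟨X₄, _, _, hT, hF.extClass_mem_of_isIso_τ₃ hS hT φ hmem⟩

/- With `D` the kernel of `p ≫ p'` and `s : H ⟶ B` that of `p'`, the inclusion `D ⟶ E` is an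
inflation because its composite with the graph `E ⟶ E ⊞ B` of `p` is the composite of the
inflations `D ⟶ E ⊞ H` and `E ⊞ H ⟶ E ⊞ B`. -/
theorem InflationsClosed.deflationsClosed (hF : IsAddSubfunctor F) (hclosed : InflationsClosed F) :
    DeflationsClosed F := by
  intro E B Z p p' hp hp'
  have : Epi p := hp.elim fun _ ⟨_, _, hS, _⟩ => hS.epi_g
  obtain ⟨H, s, w, hS, hmem⟩ := hp'
  have sq := IsPullback.of_hasPullback p s
  have hT := shortExact_comp_of_isPullback_s3 hS sq
  have hcomp : IsFInflation F (pullback.fst p s ≫ biprod.lift (𝟙 E) p) := by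
    have hgraph : pullback.fst p s ≫ biprod.lift (𝟙 E) p =
        biprod.lift (pullback.fst p s) (pullback.snd p s) ≫ biprod.map (𝟙 E) s := by
      apply biprod.hom_ext <;> simp [pullback.condition]
    rw [hgraph]
    exact hclosed _ _ (hp.isFInflation_biprod_lift hF sq)
      (IsFInflation.biprod_map_id hF ⟨Z, p', w, hS, hmem⟩ E)
  exact ⟨_, _, _, hT, IsFInflation.extClass_mem_of_comp hF hT hcomp⟩

end

/-- A closed additive subfunctor of `Ext¹` satisfies the 3×3-lemma property:
in a commutative 3×3 diagram of short exact sequences whose three columns and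
whose first and third rows are `F`-exact, the middle row is also `F`-exact. -/
theorem closed_implies_three_by_three
    (F : ∀ Z A : C, Set (Ext Z A 1)) (hF : IsAddSubfunctor F)
    (hclosed : InflationsClosed F)
    {A B Z D E G H I J : C}
    (a : A ⟶ B) (b : B ⟶ Z) (d : D ⟶ E) (e : E ⟶ G) (g : H ⟶ I) (h : I ⟶ J)
    (i : A ⟶ D) (j : B ⟶ E) (c : Z ⟶ G) (k : D ⟶ H) (l : E ⟶ I) (f : G ⟶ J)
    (w₁ : a ≫ b = 0) (w₂ : d ≫ e = 0) (w₃ : g ≫ h = 0)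
    (v₁ : i ≫ k = 0) (v₂ : j ≫ l = 0) (v₃ : c ≫ f = 0)
    (sq₁ : a ≫ j = i ≫ d) (sq₂ : b ≫ c = j ≫ e)
    (sq₃ : d ≫ l = k ≫ g) (sq₄ : e ≫ f = l ≫ h)
    (h₁ : (ShortComplex.mk a b w₁).ShortExact)
    (h₂ : (ShortComplex.mk d e w₂).ShortExact)
    (h₃ : (ShortComplex.mk g h w₃).ShortExact)
    (hc₁ : (ShortComplex.mk i k v₁).ShortExact)
    (hc₂ : (ShortComplex.mk j l v₂).ShortExact)
    (hc₃ : (ShortComplex.mk c f v₃).ShortExact)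
    (m₁ : h₁.extClass ∈ F Z A) (m₃ : h₃.extClass ∈ F J H)
    (mc₁ : hc₁.extClass ∈ F H A) (mc₂ : hc₂.extClass ∈ F I B)
    (mc₃ : hc₃.extClass ∈ F J Z) :
    h₂.extClass ∈ F G D := by
  obtain ⟨K, q, wq, hq, mq⟩ := hclosed a j ⟨Z, b, w₁, h₁, m₁⟩ ⟨I, l, v₂, hc₂, mc₂⟩
  have := h₃.mono_f
  have : Epi k := hc₁.epi_g
  have : Epi q := hq.epi_g
  obtain ⟨s, hs⟩ : ∃ s : H ⟶ K, k ≫ s = d ≫ q :=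
    ⟨_, hc₁.exact.g_desc (d ≫ q) (by simpa [sq₁] using wq)⟩
  obtain ⟨t, ht⟩ : ∃ t : K ⟶ I, q ≫ t = l := ⟨_, hq.exact.g_desc l (by simp [v₂])⟩
  obtain ⟨p, hp⟩ : ∃ p : K ⟶ G, q ≫ p = e :=
    ⟨_, hq.exact.g_desc e (by simp [← sq₂, reassoc_of% w₁])⟩
  have hst : s ≫ t = g := by rw [← cancel_epi k, reassoc_of% hs, ht, sq₃]
  have hsp : s ≫ p = 0 := by rw [← cancel_epi k, reassoc_of% hs, hp, w₂, comp_zero]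
  have : Mono s := mono_of_mono_fac hst
  let φ : ShortComplex.mk d e w₂ ⟶ ShortComplex.mk s p hsp := ⟨k, q, 𝟙 G, hs, by simp [hp]⟩
  have : IsIso φ.τ₃ := inferInstanceAs (IsIso (𝟙 G))
  have hT : (ShortComplex.mk s p hsp).ShortExact := shortExact_of_epi_τ₂_of_isIso_τ₃ h₂ φ
  have mT : hT.extClass ∈ F G H :=
    IsFInflation.extClass_mem_of_comp hF hT (j := t) (by exact hst ▸ ⟨J, h, w₃, h₃, m₃⟩)
  have he : IsFDeflation F e := hp ▸ hclosed.deflationsClosed hF q p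
    ⟨A, a ≫ j, wq, hq, mq⟩ ⟨H, s, hsp, hT, mT⟩
  exact he.extClass_mem hF h₂
end

section
/- Let C be an abelian category and ξ a proper class of short exact sequences. Then ξ is saturated (if in the standard pullback 3×3 diagram obtained from two short exact sequences over a common cokernel, the relevant column and middle row belong to ξ, then the bottom row belongs to ξ) if and only if ξ satisfies the 3×3-lemma property: in any commutative 3×3 diagram of short exact sequences in which all columns and the outer two rows lie in ξ, and either the top two rows or the bottom two rows form a morphism of short exact sequences, the middle row lies in ξ. -/
open CategoryTheory CategoryTheory.Limits CategoryTheory.Abelian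

universe w v u

variable {C : Type u} [Category.{v} C] [Abelian C] [HasExt.{w} C]

/-- The classes in `Ext Z A 1` realized by some short exact sequence in `ξ`. -/
def EClass (ξ : Set (ShortComplex C)) (Z A : C) : Set (Ext Z A 1) :=
  {δ | ∃ (B : C) (f : A ⟶ B) (g : B ⟶ Z) (w : f ≫ g = 0)
      (hS : (ShortComplex.mk f g w).ShortExact),
      ShortComplex.mk f g w ∈ ξ ∧ hS.extClass = δ}

/-- A proper class of short exact sequences: closed under isomorphism, consisting
of short exact sequences, containing all split short exact sequences, closed under
finite direct sums, and closed under base change and cobase change. -/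
structure IsProperClass (ξ : Set (ShortComplex C)) : Prop where
  shortExact : ∀ S ∈ ξ, S.ShortExact
  iso_closed : ∀ S ∈ ξ, ∀ S' : ShortComplex C, Nonempty (S ≅ S') → S' ∈ ξ
  split_mem : ∀ S : ShortComplex C, Nonempty S.Splitting → S ∈ ξ
  sum_mem : ∀ S ∈ ξ, ∀ T ∈ ξ,
    ShortComplex.mk (biprod.map S.f T.f) (biprod.map S.g T.g)
      (by ext <;> simp [S.zero, T.zero]) ∈ ξ
  base_change : ∀ (Z A : C), ∀ δ ∈ EClass ξ Z A, ∀ (Z' : C) (c : Z' ⟶ Z),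
    (Ext.mk₀ c).comp δ (zero_add 1) ∈ EClass ξ Z' A
  cobase_change : ∀ (Z A : C), ∀ δ ∈ EClass ξ Z A, ∀ (A' : C) (a : A ⟶ A'),
    δ.comp (Ext.mk₀ a) (add_zero 1) ∈ EClass ξ Z A'

/-- `ξ` is saturated: in the standard pullback 3×3 diagram obtained from two short
exact sequences over a common cokernel `Z`, if the relevant column
`A₂ → B₂ → Z` and the middle row `A₁ → M → B₂` belong to `ξ`, then the bottom
row `A₁ → B₁ → Z` belongs to `ξ`. -/
def IsSaturated (ξ : Set (ShortComplex C)) : Prop :=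
  ∀ ⦃A₁ B₁ Z A₂ B₂ M : C⦄
    (x₁ : A₁ ⟶ B₁) (y₁ : B₁ ⟶ Z) (x₂ : A₂ ⟶ B₂) (y₂ : B₂ ⟶ Z)
    (m₁ : A₁ ⟶ M) (e₁ : M ⟶ B₂) (m₂ : A₂ ⟶ M) (e₂ : M ⟶ B₁)
    (w₁ : x₁ ≫ y₁ = 0) (w₂ : x₂ ≫ y₂ = 0) (wr : m₁ ≫ e₁ = 0) (wc : m₂ ≫ e₂ = 0)
    (_c₁ : m₁ ≫ e₂ = x₁) (_c₂ : m₂ ≫ e₁ = x₂) (_c₃ : e₁ ≫ y₂ = e₂ ≫ y₁)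
    (_hpb : IsPullback e₂ e₁ y₁ y₂)
    (_h₁ : (ShortComplex.mk x₁ y₁ w₁).ShortExact)
    (_h₂ : (ShortComplex.mk x₂ y₂ w₂).ShortExact)
    (_hr : (ShortComplex.mk m₁ e₁ wr).ShortExact)
    (_hc : (ShortComplex.mk m₂ e₂ wc).ShortExact),
    ShortComplex.mk x₂ y₂ w₂ ∈ ξ → ShortComplex.mk m₁ e₁ wr ∈ ξ →
    ShortComplex.mk x₁ y₁ w₁ ∈ ξ

/-- `ξ` satisfies the 3×3-lemma property: in any commutative 3×3 diagram of short
exact sequences in which all three columns and the two outer rows belong to `ξ`,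
the middle row belongs to `ξ`. -/
def Has3x3Class (ξ : Set (ShortComplex C)) : Prop :=
  ∀ ⦃A B Z D E G H I J : C⦄
    (a : A ⟶ B) (b : B ⟶ Z) (d : D ⟶ E) (e : E ⟶ G) (g : H ⟶ I) (h : I ⟶ J)
    (i : A ⟶ D) (j : B ⟶ E) (c : Z ⟶ G) (k : D ⟶ H) (l : E ⟶ I) (f : G ⟶ J)
    (w₁ : a ≫ b = 0) (w₂ : d ≫ e = 0) (w₃ : g ≫ h = 0)
    (v₁ : i ≫ k = 0) (v₂ : j ≫ l = 0) (v₃ : c ≫ f = 0)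
    (_sq₁ : a ≫ j = i ≫ d) (_sq₂ : b ≫ c = j ≫ e)
    (_sq₃ : d ≫ l = k ≫ g) (_sq₄ : e ≫ f = l ≫ h)
    (_h₁ : (ShortComplex.mk a b w₁).ShortExact)
    (_h₂ : (ShortComplex.mk d e w₂).ShortExact)
    (_h₃ : (ShortComplex.mk g h w₃).ShortExact)
    (_hc₁ : (ShortComplex.mk i k v₁).ShortExact)
    (_hc₂ : (ShortComplex.mk j l v₂).ShortExact)
    (_hc₃ : (ShortComplex.mk c f v₃).ShortExact),
    ShortComplex.mk a b w₁ ∈ ξ → ShortComplex.mk g h w₃ ∈ ξ →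
    ShortComplex.mk i k v₁ ∈ ξ → ShortComplex.mk j l v₂ ∈ ξ →
    ShortComplex.mk c f v₃ ∈ ξ →
    ShortComplex.mk d e w₂ ∈ ξ

/-!
Membership in `ξ` depends only on the class in `Ext¹`, so write `E ⊆ Ext¹` for the classes of the
sequences in `ξ`. Since the pullback of a short exact sequence represents the pulled back class,
saturation says that `δ ∈ E` as soon as `y^* δ ∈ E` for some `ξ`-deflation `y`.

If `ξ` is saturated, let `A → B → Z`, `D → E → G`, `H → I → J` be the rows of a 3×3 diagram and `δ`
the class of the middle one. The map `E ×_J G → G` is a composite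
`E ×_J G → I ×_J G → G` of pullbacks of the `ξ`-deflations `E → I` and `I → J`, so it suffices to
pull `δ` back along it. It differs from `E ×_J G → E → G`, which kills `δ`, by a map that factors
through `Z → G`, and `δ` pulled back to `Z` is the pushout of the class of the first row.

Conversely, in a pullback diagram as in the definition of saturation, the rows `A₁ = A₁ → 0`,
`A₁ ⊞ A₂ → M → Z`, `A₂ → B₂ → Z` form a 3×3 diagram, and `A₁ → B₁ → Z` is the pushout of its
middle row along the projection `A₁ ⊞ A₂ → A₁`.
-/

lemma exists_comp_g_eq_of_mk₀_comp_extClass_eq_zero {S : ShortComplex C} (hS : S.ShortExact)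
    {X : C} (s : X ⟶ S.X₃) (h : (Ext.mk₀ s).comp hS.extClass (zero_add 1) = 0) :
    ∃ t : X ⟶ S.X₂, t ≫ S.g = s := by
  obtain ⟨τ, hτ⟩ := Ext.covariant_sequence_exact₃ X hS (Ext.mk₀ s) (zero_add 1) h
  obtain ⟨t, rfl⟩ := (Ext.mk₀_bijective _ _).2 τ
  rw [Ext.mk₀_comp_mk₀] at hτ
  exact ⟨t, (Ext.mk₀_bijective _ _).1 hτ⟩

lemma exists_f_comp_eq_of_extClass_comp_mk₀_eq_zero {S : ShortComplex C} (hS : S.ShortExact)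
    {Y : C} (s : S.X₁ ⟶ Y) (h : hS.extClass.comp (Ext.mk₀ s) (add_zero 1) = 0) :
    ∃ t : S.X₂ ⟶ Y, S.f ≫ t = s := by
  obtain ⟨τ, hτ⟩ := Ext.contravariant_sequence_exact₁ hS Y (Ext.mk₀ s) (add_zero 1) h
  obtain ⟨t, rfl⟩ := (Ext.mk₀_bijective _ _).2 τ
  rw [Ext.mk₀_comp_mk₀] at hτ
  exact ⟨t, (Ext.mk₀_bijective _ _).1 hτ⟩

lemma exists_hom_of_extClass_comp_eq {S S' : ShortComplex C} (hS : S.ShortExact)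
    (hS' : S'.ShortExact) (a : S.X₁ ⟶ S'.X₁) (c : S.X₃ ⟶ S'.X₃)
    (h : hS.extClass.comp (Ext.mk₀ a) (add_zero 1) =
      (Ext.mk₀ c).comp hS'.extClass (zero_add 1)) :
    ∃ φ : S ⟶ S', φ.τ₁ = a ∧ φ.τ₃ = c := by
  have := hS.epi_g
  have hpush : hS.extClass.comp (Ext.mk₀ (a ≫ S'.f)) (add_zero 1) = 0 := by
    rw [← Ext.mk₀_comp_mk₀, ← Ext.comp_assoc_of_second_deg_zero, h,
      Ext.comp_assoc_of_third_deg_zero, hS'.extClass_comp, Ext.comp_zero]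
  obtain ⟨b, hb⟩ := exists_f_comp_eq_of_extClass_comp_mk₀_eq_zero hS _ hpush
  let t := hS.exact.desc (b ≫ S'.g) (by rw [reassoc_of% hb, S'.zero, comp_zero])
  have ht : S.g ≫ t = b ≫ S'.g := hS.exact.g_desc _ _
  have hsub : (Ext.mk₀ (t - c)).comp hS'.extClass (zero_add 1) = 0 := by
    have hnat := hS.extClass_naturality hS'
      { τ₁ := a, τ₂ := b, τ₃ := t, comm₁₂ := hb.symm, comm₂₃ := ht.symm }
    rw [sub_eq_add_neg, Ext.mk₀_add, Ext.mk₀_neg, Ext.add_comp, Ext.neg_comp, ← h, ← hnat,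
      add_neg_cancel]
  obtain ⟨s, hs⟩ := exists_comp_g_eq_of_mk₀_comp_extClass_eq_zero hS' _ hsub
  exact ⟨{ τ₁ := a
           τ₂ := b - S.g ≫ s
           τ₃ := c
           comm₁₂ := by simp [hb]
           comm₂₃ := by simp [hs, ht] }, rfl, rfl⟩

lemma nonempty_iso_of_extClass_comp_eq {S S' : ShortComplex C} (hS : S.ShortExact)
    (hS' : S'.ShortExact) (a : S.X₁ ≅ S'.X₁) (c : S.X₃ ≅ S'.X₃)
    (h : hS.extClass.comp (Ext.mk₀ a.hom) (add_zero 1) =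
      (Ext.mk₀ c.hom).comp hS'.extClass (zero_add 1)) :
    Nonempty (S ≅ S') := by
  obtain ⟨φ, hφ₁, hφ₃⟩ := exists_hom_of_extClass_comp_eq hS hS' a.hom c.hom h
  have h₁ : IsIso φ.τ₁ := hφ₁ ▸ inferInstance
  have h₃ : IsIso φ.τ₃ := hφ₃ ▸ inferInstance
  have h₂ : IsIso φ.τ₂ := ShortComplex.isIso₂_of_shortExact_of_isIso₁₃ φ hS hS'
  have : IsIso φ := ShortComplex.isIso_of_isIso φ
  exact ⟨asIso φ⟩

lemma extClass_eq_zero_of_splitting {S : ShortComplex C} (hS : S.ShortExact) (σ : S.Splitting) :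
    hS.extClass = 0 := by
  rw [← Ext.comp_mk₀_id hS.extClass, ← σ.f_r, ← Ext.mk₀_comp_mk₀, hS.extClass_comp_assoc]

omit [HasExt.{w} C] in
lemma shortExact_of_forall_exists_lift {S : ShortComplex C} [Mono S.f] [Epi S.g]
    (h : ∀ ⦃W : C⦄ (k : W ⟶ S.X₂), k ≫ S.g = 0 → ∃ u : W ⟶ S.X₁, u ≫ S.f = k) :
    S.ShortExact where
  exact := S.exact_of_f_is_kernel (KernelFork.IsLimit.ofι' S.f S.zero fun k hk ↦
    ⟨(h k hk).choose, (h k hk).choose_spec⟩)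

omit [HasExt.{w} C] in
lemma exists_shortExact_of_isPullback {S : ShortComplex C} (hS : S.ShortExact) {Z' M : C}
    {c : Z' ⟶ S.X₃} {p : M ⟶ S.X₂} {q : M ⟶ Z'} (hp : IsPullback p q S.g c) :
    ∃ (m : S.X₁ ⟶ M) (w : m ≫ q = 0), (ShortComplex.mk m q w).ShortExact ∧ m ≫ p = S.f := by
  have := hS.mono_f
  have := hS.epi_g
  let m := hp.lift S.f 0 (by simp)
  have hmp : m ≫ p = S.f := hp.lift_fst _ _ _
  have hmq : m ≫ q = 0 := hp.lift_snd _ _ _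
  have : Mono m := mono_of_mono_fac hmp
  have : Epi q := epi_snd_of_isLimit S.g c hp.isLimit
  refine ⟨m, hmq, shortExact_of_forall_exists_lift fun W k (hk : k ≫ q = 0) ↦ ?_, hmp⟩
  obtain ⟨u, hu⟩ := hS.exact.lift' (k ≫ p) (by
    rw [Category.assoc, hp.w, reassoc_of% hk, zero_comp])
  refine ⟨u, hp.hom_ext ?_ ?_⟩
  · rw [Category.assoc, hmp, hu]
  · rw [Category.assoc, hmq, hk, comp_zero]

lemma extClass_eq_mk₀_comp_of_commSq {S : ShortComplex C} (hS : S.ShortExact) {Z' M : C}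
    {c : Z' ⟶ S.X₃} {p : M ⟶ S.X₂} {m : S.X₁ ⟶ M} {q : M ⟶ Z'} {w : m ≫ q = 0}
    (sq : CommSq p q S.g c) (hT : (ShortComplex.mk m q w).ShortExact) (hm : m ≫ p = S.f) :
    hT.extClass = (Ext.mk₀ c).comp hS.extClass (zero_add 1) := by
  rw [← Ext.comp_mk₀_id hT.extClass]
  exact hT.extClass_naturality hS
    { τ₁ := 𝟙 S.X₁, τ₂ := p, τ₃ := c, comm₁₂ := by simp [hm], comm₂₃ := sq.w }

omit [HasExt.{w} C] in
lemma exists_shortExact_biprod_desc_of_isPullback {A₁ A₂ B₁ B₂ M Z : C}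
    {x₁ : A₁ ⟶ B₁} {y₁ : B₁ ⟶ Z} {x₂ : A₂ ⟶ B₂} {y₂ : B₂ ⟶ Z}
    {m₁ : A₁ ⟶ M} {e₁ : M ⟶ B₂} {m₂ : A₂ ⟶ M} {e₂ : M ⟶ B₁}
    {w₁ : x₁ ≫ y₁ = 0} {w₂ : x₂ ≫ y₂ = 0} (hpb : IsPullback e₂ e₁ y₁ y₂)
    (h₁ : (ShortComplex.mk x₁ y₁ w₁).ShortExact) (h₂ : (ShortComplex.mk x₂ y₂ w₂).ShortExact)
    (hm₁e₁ : m₁ ≫ e₁ = 0) (hm₂e₂ : m₂ ≫ e₂ = 0) (hm₁e₂ : m₁ ≫ e₂ = x₁) (hm₂e₁ : m₂ ≫ e₁ = x₂) :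
    ∃ w : biprod.desc m₁ m₂ ≫ e₁ ≫ y₂ = 0,
      (ShortComplex.mk (biprod.desc m₁ m₂) (e₁ ≫ y₂) w).ShortExact := by
  have hx₁ : Mono x₁ := h₁.mono_f
  have hx₂ : Mono x₂ := h₂.mono_f
  have hy₁ : Epi y₁ := h₁.epi_g
  have hy₂ : Epi y₂ := h₂.epi_g
  have he₁ : Epi e₁ := epi_snd_of_isLimit y₁ y₂ hpb.isLimit
  have desc_e₁ : biprod.desc m₁ m₂ ≫ e₁ = biprod.snd ≫ x₂ := by ext <;> simp [hm₁e₁, hm₂e₁]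
  have desc_e₂ : biprod.desc m₁ m₂ ≫ e₂ = biprod.fst ≫ x₁ := by ext <;> simp [hm₁e₂, hm₂e₂]
  have : Mono (biprod.desc m₁ m₂) := by
    refine Preadditive.mono_of_cancel_zero _ fun s hs ↦ biprod.hom_ext _ _ ?_ ?_
    · rw [← cancel_mono x₁, Category.assoc, ← desc_e₂, reassoc_of% hs]
      simp only [zero_comp]
    · rw [← cancel_mono x₂, Category.assoc, ← desc_e₁, reassoc_of% hs]
      simp only [zero_comp]
  have hw : biprod.desc m₁ m₂ ≫ e₁ ≫ y₂ = 0 := by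
    rw [reassoc_of% desc_e₁, w₂, comp_zero]
  refine ⟨hw, shortExact_of_forall_exists_lift fun W k (hk : k ≫ e₁ ≫ y₂ = 0) ↦ ?_⟩
  obtain ⟨v, hv⟩ := h₁.exact.lift' (k ≫ e₂) (by simpa [hpb.w] using hk)
  obtain ⟨u, hu⟩ := h₂.exact.lift' (k ≫ e₁) (by simpa using hk)
  refine ⟨biprod.lift v u, hpb.hom_ext ?_ ?_⟩
  · rw [Category.assoc, desc_e₂, biprod.lift_fst_assoc]
    exact hv
  · rw [Category.assoc, desc_e₁, biprod.lift_snd_assoc]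
    exact hu

/-- A class of short complexes closed under isomorphism whose short exact members are closed under
base change and cobase change: a proper class without the requirements about split sequences and
direct sums. As in `IsProperClass`, the last two closure properties are expressed through the
classes in `Ext¹`. -/
structure IsBaseCobaseClosed (ξ : Set (ShortComplex C)) : Prop where
  iso_closed : ∀ S ∈ ξ, ∀ S' : ShortComplex C, Nonempty (S ≅ S') → S' ∈ ξ
  base_change : ∀ (Z A : C), ∀ δ ∈ EClass ξ Z A, ∀ (Z' : C) (c : Z' ⟶ Z),
    (Ext.mk₀ c).comp δ (zero_add 1) ∈ EClass ξ Z' A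
  cobase_change : ∀ (Z A : C), ∀ δ ∈ EClass ξ Z A, ∀ (A' : C) (a : A ⟶ A'),
    δ.comp (Ext.mk₀ a) (add_zero 1) ∈ EClass ξ Z A'

lemma IsProperClass.isBaseCobaseClosed {ξ : Set (ShortComplex C)} (hξ : IsProperClass ξ) :
    IsBaseCobaseClosed ξ where
  iso_closed := hξ.iso_closed
  base_change := hξ.base_change
  cobase_change := hξ.cobase_change

namespace IsBaseCobaseClosed

variable {ξ : Set (ShortComplex C)} (hξ : IsBaseCobaseClosed ξ)

include hξ

lemma extClass_mem_EClass_iff {S : ShortComplex C} (hS : S.ShortExact) :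
    hS.extClass ∈ EClass ξ S.X₃ S.X₁ ↔ S ∈ ξ := by
  refine ⟨?_, fun hSξ ↦ ⟨S.X₂, S.f, S.g, S.zero, hS, hSξ, rfl⟩⟩
  rintro ⟨B, f, g, w, hT, hTξ, hTS⟩
  refine hξ.iso_closed _ hTξ _ (nonempty_iso_of_extClass_comp_eq hT hS (Iso.refl _) (Iso.refl _) ?_)
  exact (Ext.comp_mk₀_id _).trans (hTS.trans (Ext.mk₀_id_comp _).symm)

lemma zero_mem_EClass {S : ShortComplex C} (hS : S.ShortExact) (hSξ : S ∈ ξ) (Z A : C) :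
    (0 : Ext Z A 1) ∈ EClass ξ Z A := by
  have h := hξ.base_change _ _ _ (hξ.cobase_change _ _ _
    ((hξ.extClass_mem_EClass_iff hS).2 hSξ) A 0) Z 0
  rwa [Ext.mk₀_zero, Ext.mk₀_zero, Ext.zero_comp] at h

lemma mem_of_splitting {S : ShortComplex C} (hS : S.ShortExact) (hSξ : S ∈ ξ)
    {T : ShortComplex C} (σ : T.Splitting) : T ∈ ξ := by
  rw [← hξ.extClass_mem_EClass_iff σ.shortExact, extClass_eq_zero_of_splitting σ.shortExact σ]
  exact hξ.zero_mem_EClass hS hSξ _ _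

lemma mem_of_commSq {S : ShortComplex C} (hS : S.ShortExact) (hSξ : S ∈ ξ) {Z' M : C}
    {c : Z' ⟶ S.X₃} {p : M ⟶ S.X₂} {m : S.X₁ ⟶ M} {q : M ⟶ Z'} {w : m ≫ q = 0}
    (sq : CommSq p q S.g c) (hT : (ShortComplex.mk m q w).ShortExact) (hm : m ≫ p = S.f) :
    ShortComplex.mk m q w ∈ ξ := by
  rw [← hξ.extClass_mem_EClass_iff hT, extClass_eq_mk₀_comp_of_commSq hS sq hT hm]
  exact hξ.base_change _ _ _ ((hξ.extClass_mem_EClass_iff hS).2 hSξ) _ _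

lemma mem_of_isIso_τ₃ {S S' : ShortComplex C} (hS : S.ShortExact) (hSξ : S ∈ ξ)
    (hS' : S'.ShortExact) (φ : S ⟶ S') [IsIso φ.τ₃] : S' ∈ ξ := by
  have hclass : hS'.extClass = (Ext.mk₀ (inv φ.τ₃)).comp
      (hS.extClass.comp (Ext.mk₀ φ.τ₁) (add_zero 1)) (zero_add 1) := by
    rw [hS.extClass_naturality hS', Ext.mk₀_comp_mk₀_assoc, IsIso.inv_hom_id, Ext.mk₀_id_comp]
  rw [← hξ.extClass_mem_EClass_iff hS', hclass]
  exact hξ.base_change _ _ _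
    (hξ.cobase_change _ _ _ ((hξ.extClass_mem_EClass_iff hS).2 hSξ) _ _) _ _

lemma mk₀_comp_extClass_mem_EClass {S₁ S₂ : ShortComplex C} (h₁ : S₁.ShortExact)
    (h₂ : S₂.ShortExact) (hS₁ξ : S₁ ∈ ξ) (φ : S₁ ⟶ S₂) [Mono φ.τ₃] {J : C} {f : S₂.X₃ ⟶ J}
    {w : φ.τ₃ ≫ f = 0} (hf : (ShortComplex.mk φ.τ₃ f w).Exact) {N : C} {u : N ⟶ S₂.X₂}
    {v : N ⟶ S₂.X₃} (huv : u ≫ S₂.g ≫ f = v ≫ f) :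
    (Ext.mk₀ v).comp h₂.extClass (zero_add 1) ∈ EClass ξ N S₂.X₁ := by
  obtain ⟨z, hz⟩ : ∃ z : N ⟶ S₁.X₃, z ≫ φ.τ₃ = v - u ≫ S₂.g :=
    ⟨_, hf.lift_f (v - u ≫ S₂.g) (by simp [huv])⟩
  have hclass : (Ext.mk₀ v).comp h₂.extClass (zero_add 1) =
      (Ext.mk₀ z).comp (h₁.extClass.comp (Ext.mk₀ φ.τ₁) (add_zero 1)) (zero_add 1) := by
    rw [← sub_add_cancel v (u ≫ S₂.g), ← hz, Ext.mk₀_add, Ext.add_comp,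
      ← Ext.mk₀_comp_mk₀_assoc, ← Ext.mk₀_comp_mk₀_assoc, h₂.comp_extClass, Ext.comp_zero,
      add_zero, h₁.extClass_naturality h₂]
  rw [hclass]
  exact hξ.base_change _ _ _
    (hξ.cobase_change _ _ _ ((hξ.extClass_mem_EClass_iff h₁).2 hS₁ξ) _ _) _ _

lemma mem_of_isSaturated (hsat : IsSaturated ξ) {S : ShortComplex C} (hS : S.ShortExact)
    {A B : C} {x : A ⟶ B} {y : B ⟶ S.X₃} {w : x ≫ y = 0} (hT : (ShortComplex.mk x y w).ShortExact)
    (hTξ : ShortComplex.mk x y w ∈ ξ)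
    (h : (Ext.mk₀ y).comp hS.extClass (zero_add 1) ∈ EClass ξ B S.X₁) : S ∈ ξ := by
  have hp := IsPullback.of_hasPullback S.g y
  obtain ⟨m, wm, hm, m_fst⟩ := exists_shortExact_of_isPullback hS hp
  obtain ⟨n, wn, hn, n_snd⟩ := exists_shortExact_of_isPullback hT hp.flip
  have hmξ : ShortComplex.mk m (pullback.snd S.g y) wm ∈ ξ := by
    rwa [← hξ.extClass_mem_EClass_iff hm, extClass_eq_mk₀_comp_of_commSq hS hp.toCommSq hm m_fst]
  exact hsat S.f S.g x y m _ n _ S.zero w wm wn m_fst n_snd hp.w.symm hp hS hT hm hn hTξ hmξ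

lemma mem_middle_row_of_isSaturated (hsat : IsSaturated ξ) {S₁ S₂ S₃ : ShortComplex C}
    (h₁ : S₁.ShortExact) (h₂ : S₂.ShortExact) (h₃ : S₃.ShortExact) (φ : S₁ ⟶ S₂) (ψ : S₂ ⟶ S₃)
    {w₂ : φ.τ₂ ≫ ψ.τ₂ = 0} {w₃ : φ.τ₃ ≫ ψ.τ₃ = 0}
    (hc₂ : (ShortComplex.mk φ.τ₂ ψ.τ₂ w₂).ShortExact) [Mono φ.τ₃]
    (hc₃ : (ShortComplex.mk φ.τ₃ ψ.τ₃ w₃).Exact)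
    (hS₁ξ : S₁ ∈ ξ) (hS₃ξ : S₃ ∈ ξ) (hc₂ξ : ShortComplex.mk φ.τ₂ ψ.τ₂ w₂ ∈ ξ) : S₂ ∈ ξ := by
  let q := pullback.snd S₃.g ψ.τ₃
  let r := pullback.snd ψ.τ₂ (pullback.fst S₃.g ψ.τ₃)
  have hP : IsPullback (pullback.fst S₃.g ψ.τ₃) q S₃.g ψ.τ₃ := .of_hasPullback _ _
  have hN : IsPullback (pullback.fst _ _) r ψ.τ₂ (pullback.fst S₃.g ψ.τ₃) := .of_hasPullback _ _
  have hT := IsPullback.of_hasPullback S₂.g q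
  obtain ⟨_, _, hq, hq_fst⟩ := exists_shortExact_of_isPullback h₃ hP
  obtain ⟨_, _, hr, hr_fst⟩ := exists_shortExact_of_isPullback hc₂ hN
  obtain ⟨_, _, ht, ht_fst⟩ := exists_shortExact_of_isPullback h₂ hT
  have hqξ := hξ.mem_of_commSq h₃ hS₃ξ hP.toCommSq hq hq_fst
  have hrξ := hξ.mem_of_commSq hc₂ hc₂ξ hN.toCommSq hr hr_fst
  have ht_class := extClass_eq_mk₀_comp_of_commSq h₂ hT.toCommSq ht ht_fst
  have hrq : (Ext.mk₀ (r ≫ q)).comp h₂.extClass (zero_add 1) ∈ EClass ξ _ S₂.X₁ :=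
    hξ.mk₀_comp_extClass_mem_EClass h₁ h₂ hS₁ξ φ hc₃
      (by rw [← ψ.comm₂₃, reassoc_of% hN.w, hP.w, Category.assoc])
  have htξ := hξ.mem_of_isSaturated hsat ht hr hrξ
    (by rwa [ht_class, Ext.mk₀_comp_mk₀_assoc])
  exact hξ.mem_of_isSaturated hsat h₂ hq hqξ
    (ht_class ▸ (hξ.extClass_mem_EClass_iff ht).2 htξ)

lemma has3x3Class_of_isSaturated (hsat : IsSaturated ξ) : Has3x3Class ξ := by
  intro A B Z D E G H I J a b d e g h i j c k l f w₁ w₂ w₃ v₁ v₂ v₃ sq₁ sq₂ sq₃ sq₄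
    h₁ h₂ h₃ _ hc₂ hc₃ hr₁ξ hr₃ξ _ hc₂ξ _
  let φ : ShortComplex.mk a b w₁ ⟶ ShortComplex.mk d e w₂ :=
    { τ₁ := i, τ₂ := j, τ₃ := c, comm₁₂ := sq₁.symm, comm₂₃ := sq₂.symm }
  let ψ : ShortComplex.mk d e w₂ ⟶ ShortComplex.mk g h w₃ :=
    { τ₁ := k, τ₂ := l, τ₃ := f, comm₁₂ := sq₃.symm, comm₂₃ := sq₄.symm }
  have : Mono φ.τ₃ := hc₃.mono_f
  exact hξ.mem_middle_row_of_isSaturated hsat h₁ h₂ h₃ φ ψ hc₂ hc₃.exact hr₁ξ hr₃ξ hc₂ξ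

open scoped ZeroObject in
lemma isSaturated_of_has3x3Class (h33 : Has3x3Class ξ) : IsSaturated ξ := by
  intro A₁ B₁ Z A₂ B₂ M x₁ y₁ x₂ y₂ m₁ e₁ m₂ e₂ w₁ w₂ wr wc hm₁e₂ hm₂e₁ he hpb h₁ h₂ hr _ h₂ξ hrξ
  obtain ⟨w, hS⟩ := exists_shortExact_biprod_desc_of_isPullback hpb h₁ h₂ wr wc hm₁e₂ hm₂e₁
  let top : (ShortComplex.mk (𝟙 A₁) (0 : A₁ ⟶ (0 : C)) comp_zero).Splitting :=
    .ofIsIsoOfIsZero _ inferInstance (isZero_zero C)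
  let left := ShortComplex.Splitting.ofHasBinaryBiproduct A₁ A₂
  let right : (ShortComplex.mk (0 : (0 : C) ⟶ Z) (𝟙 Z) zero_comp).Splitting :=
    .ofIsZeroOfIsIso _ (isZero_zero C) inferInstance
  have hSξ : ShortComplex.mk (biprod.desc m₁ m₂) (e₁ ≫ y₂) w ∈ ξ :=
    h33 (𝟙 A₁) 0 (biprod.desc m₁ m₂) (e₁ ≫ y₂) x₂ y₂ biprod.inl m₁ 0 biprod.snd e₁ (𝟙 Z)
      comp_zero w w₂ (by simp) wr zero_comp
      (by simp) (by simp [reassoc_of% wr]) (by ext <;> simp [wr, hm₂e₁]) (by simp)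
      top.shortExact hS h₂ left.shortExact hr right.shortExact
      (hξ.mem_of_splitting h₂ h₂ξ top) h₂ξ
      (hξ.mem_of_splitting h₂ h₂ξ left) hrξ (hξ.mem_of_splitting h₂ h₂ξ right)
  let π : ShortComplex.mk (biprod.desc m₁ m₂) (e₁ ≫ y₂) w ⟶ ShortComplex.mk x₁ y₁ w₁ :=
    { τ₁ := biprod.fst
      τ₂ := e₂
      τ₃ := 𝟙 Z
      comm₁₂ := by ext <;> simp [wc, hm₁e₂]
      comm₂₃ := by simp [he] }
  have : IsIso π.τ₃ := inferInstanceAs (IsIso (𝟙 Z))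
  exact hξ.mem_of_isIso_τ₃ hS hSξ h₁ π

end IsBaseCobaseClosed

theorem saturated_iff_three_by_three_general {ξ : Set (ShortComplex C)}
    (hξ : IsBaseCobaseClosed ξ) : IsSaturated ξ ↔ Has3x3Class ξ :=
  ⟨hξ.has3x3Class_of_isSaturated, hξ.isSaturated_of_has3x3Class⟩

/-- A proper class `ξ` is saturated if and only if it satisfies the 3×3-lemma
property. -/
theorem saturated_iff_three_by_three
    (ξ : Set (ShortComplex C)) (hξ : IsProperClass ξ) :
    IsSaturated ξ ↔ Has3x3Class ξ :=
  saturated_iff_three_by_three_general hξ.isBaseCobaseClosed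
end

section
/- Let C be an abelian category and F an additive subfunctor of Ext^1 such that F-deflations are closed under composition. Then for any F-exact short exact sequence 0 → A → B → C → 0 and any object X, the induced sequence of abelian groups F(X,A) → F(X,B) → F(X,C) (maps given by pushforward of extension classes) is exact at F(X,B). -/
open CategoryTheory CategoryTheory.Limits CategoryTheory.Abelian

universe w v u

variable {C : Type u} [Category.{v} C] [Abelian C] [HasExt.{w} C]

/-!
Let `A → B → Z` be `F`-exact and suppose `δ ∈ F(X, B)` dies in `Ext¹(X, Z)`. The long exact sequence
of `Ext` provides a preimage `μ ∈ Ext¹(X, A)` of `δ`, and the point is that `μ` automatically lies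
in `F`. Realize `μ` by a short exact sequence `A → M → X`, so that `δ` is realized by
`B → E → X` with `E` the pushout of `A → B` and `A → M`. Then `E → X` is an `F`-deflation, and so
is `B ⊞ M → E`, because `A → B ⊞ M → E` is a pullback of `A → B → Z`. Hence the composition
`B ⊞ M → E → X` is an `F`-deflation; it factors through `M → X`, so `A → M → X` is a pushout of an
`F`-exact sequence.

The realization of `μ` rests on effaceability: a morphism `X → A[n]` in the derived category with
`n ≠ 0` is a fraction `X ← K → A[n]` of cochain complexes, and `K → A[n]` vanishes on the cycles of
`K` in degree zero, which surject onto `X`. Once `μ` dies on some epimorphism `P → X`, it is a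
pushout of the class of `ker → P → X`.
-/

omit [HasExt.{w} C] in
lemma exists_epi_comp_eq_single_map {ι : Type*} [DecidableEq ι] {c : ComplexShape ι} {n : ι}
    {K : HomologicalComplex C c} {X : C} (s : K ⟶ (HomologicalComplex.single C c n).obj X)
    [Epi (HomologicalComplex.homologyMap s n)] :
    ∃ (P : C) (p : P ⟶ X) (_ : Epi p) (i : (HomologicalComplex.single C c n).obj P ⟶ K),
      i ≫ s = (HomologicalComplex.single C c n).map p := by
  refine ⟨K.cycles n, K.homologyπ n ≫ HomologicalComplex.homologyMap s n ≫
      (HomologicalComplex.singleObjHomologySelfIso c n X).hom, inferInstance,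
    HomologicalComplex.mkHomFromSingle (K.iCycles n) (by simp), ?_⟩
  apply HomologicalComplex.from_single_hom_ext
  simp [HomologicalComplex.single_map_f_self, HomologicalComplex.singleObjCyclesSelfIso_hom]

open DerivedCategory in
omit [HasExt.{w} C] in
lemma exists_epi_singleFunctor_map_comp_eq_zero [HasDerivedCategory.{w} C] {X A : C} {a b : ℤ}
    (hab : a ≠ b) (φ : (singleFunctor C a).obj X ⟶ (singleFunctor C b).obj A) :
    ∃ (P : C) (p : P ⟶ X) (_ : Epi p), (singleFunctor C a).map p ≫ φ = 0 := by
  obtain ⟨K, s, _, g, rfl⟩ := right_fac (X := (HomologicalComplex.single C (.up ℤ) a).obj X)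
    (Y := (HomologicalComplex.single C (.up ℤ) b).obj A) φ
  have : QuasiIso s := (isIso_Q_map_iff_quasiIso C s).1 inferInstance
  obtain ⟨P, p, hp, i, hi⟩ := exists_epi_comp_eq_single_map s
  have hig : i ≫ g = 0 := HomologicalComplex.from_single_hom_ext
    ((HomologicalComplex.isZero_single_obj_X _ _ _ _ hab).eq_of_tgt _ _)
  refine ⟨P, p, hp, ?_⟩
  calc Q.map ((HomologicalComplex.single C (.up ℤ) a).map p) ≫ inv (Q.map s) ≫ Q.map g
      = Q.map (i ≫ s) ≫ inv (Q.map s) ≫ Q.map g := by rw [hi]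
    _ = Q.map (i ≫ g) := by
        rw [Q.map_comp, Q.map_comp, Category.assoc, IsIso.hom_inv_id_assoc]
    _ = 0 := by rw [hig, Functor.map_zero]

open DerivedCategory in
lemma exists_epi_mk₀_comp_eq_zero {X A : C} {n : ℕ} (hn : n ≠ 0) (x : Ext X A n) :
    ∃ (P : C) (p : P ⟶ X) (_ : Epi p), (Ext.mk₀ p).comp x (zero_add n) = 0 := by
  let := HasDerivedCategory.standard C
  let e : ((singleFunctor C 0).obj A)⟦(n : ℤ)⟧ ≅ (singleFunctor C (-n)).obj A :=
    ((singleFunctors C).shiftIso n (-n) 0 (by simp)).app A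
  obtain ⟨P, p, hp, h⟩ := exists_epi_singleFunctor_map_comp_eq_zero
    (a := 0) (b := -n) (by lia) (x.hom ≫ e.hom)
  refine ⟨P, p, hp, ?_⟩
  ext
  rw [← Ext.singleFunctor_map_comp_hom, Ext.zero_hom, ← cancel_mono e.hom, Category.assoc, h,
    zero_comp]

section ShortExact

variable {A A' E E' X X' : C} {f : A ⟶ E} {g : E ⟶ X} {w : f ≫ g = 0}
  (hS : (ShortComplex.mk f g w).ShortExact)

include hS

lemma extClass_eq_extClass_comp_mk₀ {f' : A' ⟶ E'} {g' : E' ⟶ X} {w' : f' ≫ g' = 0}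
    (hS' : (ShortComplex.mk f' g' w').ShortExact) (a : A ⟶ A') (e : E ⟶ E')
    (hf : a ≫ f' = f ≫ e) (hg : e ≫ g' = g) :
    hS'.extClass = hS.extClass.comp (Ext.mk₀ a) (add_zero 1) := by
  simpa using (ShortComplex.ShortExact.extClass_naturality hS hS'
    { τ₁ := a, τ₂ := e, τ₃ := 𝟙 X, comm₁₂ := hf, comm₂₃ := by simp [hg] }).symm

lemma extClass_eq_mk₀_comp_extClass {f' : A ⟶ E'} {g' : E' ⟶ X'} {w' : f' ≫ g' = 0}
    (hS' : (ShortComplex.mk f' g' w').ShortExact) (e : E ⟶ E') (x : X ⟶ X')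
    (hf : f ≫ e = f') (hg : e ≫ g' = g ≫ x) :
    hS.extClass = (Ext.mk₀ x).comp hS'.extClass (zero_add 1) := by
  simpa using ShortComplex.ShortExact.extClass_naturality hS hS'
    { τ₁ := 𝟙 A, τ₂ := e, τ₃ := x, comm₁₂ := by simp [hf], comm₂₃ := hg }

omit [HasExt.{w} C] in
lemma shortExact_of_isPushout {a : A ⟶ A'} {i : A' ⟶ E'} {c : E ⟶ E'} (sq : IsPushout a f i c)
    {q : E' ⟶ X} (hi : i ≫ q = 0) (hc : c ≫ q = g) : (ShortComplex.mk i q hi).ShortExact := by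
  have : Mono f := hS.mono_f
  have : Epi g := hS.epi_g
  have : Epi q := epi_of_epi_fac hc
  have : Mono i := (MorphismProperty.monomorphisms C).of_isPushout sq ‹Mono f›
  refine { exact := ShortComplex.exact_of_g_is_cokernel _ (CokernelCofork.IsColimit.ofπ' q hi ?_) }
  intro W k hk
  have hck : f ≫ c ≫ k = 0 := by rw [← sq.w_assoc, hk, comp_zero]
  refine ⟨hS.exact.desc (c ≫ k) hck, sq.hom_ext ?_ ?_⟩
  · rw [reassoc_of% hi, zero_comp, hk]
  · rw [reassoc_of% hc]
    exact hS.exact.g_desc (c ≫ k) hck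

omit [HasExt.{w} C] in
lemma exists_isPushout_shortExact (a : A ⟶ A') :
    ∃ (E' : C) (i : A' ⟶ E') (c : E ⟶ E') (q : E' ⟶ X) (hi : i ≫ q = 0),
      IsPushout a f i c ∧ c ≫ q = g ∧ (ShortComplex.mk i q hi).ShortExact := by
  have sq := IsPushout.of_hasPushout a f
  obtain ⟨q, hi, hc⟩ := sq.exists_desc 0 g (by rw [w, comp_zero])
  exact ⟨_, _, _, q, hi, sq, hc, shortExact_of_isPushout hS sq hi hc⟩

end ShortExact

lemma exists_extClass_eq {X A : C} (x : Ext X A 1) :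
    ∃ (E : C) (f : A ⟶ E) (g : E ⟶ X) (w : f ≫ g = 0)
      (hS : (ShortComplex.mk f g w).ShortExact), hS.extClass = x := by
  obtain ⟨P, p, _, hx⟩ := exists_epi_mk₀_comp_eq_zero one_ne_zero x
  have hP : (ShortComplex.mk (kernel.ι p) p (kernel.condition p)).ShortExact :=
    { exact := ShortComplex.exact_kernel p }
  obtain ⟨y, hy⟩ := Ext.contravariant_sequence_exact₃ hP A x hx (add_zero 1)
  obtain ⟨a, rfl⟩ := (Ext.mk₀_bijective _ _).2 y
  obtain ⟨E, i, c, q, hi, sq, hc, hE⟩ := exists_isPushout_shortExact hP a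
  exact ⟨E, i, q, hi, hE, (extClass_eq_extClass_comp_mk₀ hP hE a c sq.w hc).trans hy⟩

namespace IsAddSubfunctor

variable {F : ∀ Z A : C, Set (Ext Z A 1)} (hF : IsAddSubfunctor F)

include hF

lemma isFDeflation_biprod_desc {A B M E : C} {f : A ⟶ B} {j : A ⟶ M} {i : B ⟶ E} {c : M ⟶ E}
    (hf : IsFInflation F f) (sq : IsPushout f j i c) : IsFDeflation F (biprod.desc i c) := by
  obtain ⟨Z, g, w, hS, hmem⟩ := hf
  have : Mono f := hS.mono_f
  have hlift : Mono (biprod.lift f (-j)) := mono_of_mono_fac (biprod.lift_fst f (-j))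
  have hD : sq.shortComplex.ShortExact :=
    { exact := sq.exact_shortComplex
      mono_f := hlift
      epi_g := sq.epi_shortComplex_g }
  obtain ⟨h, hi, hc⟩ := sq.exists_desc g 0 (by rw [w, comp_zero])
  have hfst : biprod.fst ≫ g = biprod.desc i c ≫ h := by
    apply biprod.hom_ext' <;> simp [hi, hc]
  refine ⟨A, biprod.lift f (-j), sq.shortComplex.zero, hD, ?_⟩
  rw [extClass_eq_mk₀_comp_extClass hD hS biprod.fst h (biprod.lift_fst _ _) hfst]
  exact hF.pull _ _ _ h _ hmem

lemma extClass_mem_of_isFDeflation_comp {A E X Y : C} {f : A ⟶ E} {g : E ⟶ X} {w : f ≫ g = 0}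
    (hS : (ShortComplex.mk f g w).ShortExact) (b : Y ⟶ E) (hb : IsFDeflation F (b ≫ g)) :
    hS.extClass ∈ F X A := by
  obtain ⟨K, k, hk, hK, hmem⟩ := hb
  have : Mono f := hS.mono_f
  have hkb : (k ≫ b) ≫ g = 0 := by rw [Category.assoc, hk]
  rw [extClass_eq_extClass_comp_mk₀ hK hS (hS.exact.lift (k ≫ b) hkb) b
    (hS.exact.lift_f (k ≫ b) hkb) rfl]
  exact hF.push _ _ _ _ _ hmem

lemma mem_of_comp_mk₀_mem (hclosed : DeflationsClosed F) {A B X : C} {f : A ⟶ B}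
    (hf : IsFInflation F f) {μ : Ext X A 1} (hμ : μ.comp (Ext.mk₀ f) (add_zero 1) ∈ F X B) :
    μ ∈ F X A := by
  obtain ⟨M, j, p, w, hM, rfl⟩ := exists_extClass_eq μ
  obtain ⟨E, i, c, q, hi, sq, hc, hE⟩ := exists_isPushout_shortExact hM f
  have hq : IsFDeflation F q :=
    ⟨B, i, hi, hE, by rwa [extClass_eq_extClass_comp_mk₀ hM hE f c sq.w hc]⟩
  have hfac : biprod.desc i c ≫ q = biprod.snd ≫ p := by
    apply biprod.hom_ext' <;> simp [hi, hc]
  apply hF.extClass_mem_of_isFDeflation_comp hM biprod.snd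
  rw [← hfac]
  exact hclosed _ _ (hF.isFDeflation_biprod_desc hf sq) hq

end IsAddSubfunctor

/-- If the `F`-deflations are closed under composition, then for every `F`-exact
short exact sequence `A → B → Z` and every object `X`, the sequence
`F(X,A) → F(X,B) → F(X,Z)` is exact at `F(X,B)`. -/
theorem FSequence_exact_at_middle
    (F : ∀ Z A : C, Set (Ext Z A 1)) (hF : IsAddSubfunctor F)
    (hclosed : DeflationsClosed F)
    (S : ShortComplex C) (hS : S.ShortExact) (hmem : hS.extClass ∈ F S.X₃ S.X₁)
    (X : C) (δ : Ext X S.X₂ 1) (hδ : δ ∈ F X S.X₂) :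
    δ.comp (Ext.mk₀ S.g) (add_zero 1) = 0 ↔
      ∃ μ ∈ F X S.X₁, μ.comp (Ext.mk₀ S.f) (add_zero 1) = δ := by
  constructor
  · intro h
    obtain ⟨μ, hμ⟩ := Ext.covariant_sequence_exact₂ X hS δ h
    have hf : IsFInflation F S.f := ⟨S.X₃, S.g, S.zero, hS, hmem⟩
    exact ⟨μ, hF.mem_of_comp_mk₀_mem hclosed hf (hμ ▸ hδ), hμ⟩
  · rintro ⟨μ, -, rfl⟩
    simp
end
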